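/- Let G=(V,E) be a finite weighted graph, k ≥ 1 an integer with k+1 ≤ |V|, and 0 < ε < 1. If ρ(k+1) > (1+ε)·ρ(k), then there exists a partition of V into k nonempty sets P_1,…,P_k such that for every 1 ≤ i ≤ k: φ(G[P_i]) ≥ ε·ρ(k+1)/(14k) and φ_G(P_i) ≤ k·ρ(k). -/

import Mathlib

open Finset

/-- Weighted degree of a vertex. -/
noncomputable def deg {V : Type*} [Fintype V] (w : V → V → ℝ) (v : V) : ℝ :=
  ∑ u, w v u

/-- Volume of a set of vertices. -/
noncomputable def vol {V : Type*} [Fintype V] (w : V → V → ℝ) (S : Finset V) : ℝ :=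
  ∑ v ∈ S, deg w v

/-- Total weight of edges from `S` to `T \ S`. -/
noncomputable def eW {V : Type*} [DecidableEq V] (w : V → V → ℝ) (S T : Finset V) : ℝ :=
  ∑ u ∈ S, ∑ v ∈ T \ S, w u v

/-- Conductance of `S` in `G`. -/
noncomputable def phi {V : Type*} [Fintype V] [DecidableEq V] (w : V → V → ℝ)
    (S : Finset V) : ℝ :=
  eW w S Finset.univ / vol w S

/-- Volume of `S ⊆ P` inside the induced subgraph `G[P]`. -/
noncomputable def volIn {V : Type*} [DecidableEq V] (w : V → V → ℝ) (P S : Finset V) : ℝ :=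
  ∑ v ∈ S, ∑ u ∈ P, w v u

/-- `φ(G[P]) ≥ a` : every nonempty proper `S ⊊ P` with at most half of the induced volume
has induced conductance at least `a` (stated multiplicatively). -/
def inCondGE {V : Type*} [DecidableEq V] (w : V → V → ℝ) (P : Finset V) (a : ℝ) : Prop :=
  ∀ S : Finset V, S ⊆ P → S.Nonempty → S ≠ P →
    volIn w P S ≤ volIn w P P / 2 → a * volIn w P S ≤ eW w S P

/-- `ρ(k)`: the minimum over families of `k` pairwise disjoint nonempty subsets of the
maximum conductance. -/
noncomputable def rho {V : Type*} [Fintype V] [DecidableEq V] (w : V → V → ℝ) (k : ℕ) : ℝ :=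
  sInf { r | ∃ A : Fin k → Finset V, (∀ i, (A i).Nonempty) ∧
    (∀ i j, i ≠ j → Disjoint (A i) (A j)) ∧ r = ⨆ i, phi w (A i) }

/-- The normalized Laplacian `I - D^{-1/2} A D^{-1/2}`. -/
noncomputable def normLap {V : Type*} [Fintype V] [DecidableEq V] (w : V → V → ℝ) : Matrix V V ℝ :=
  1 - Matrix.of fun u v => w u v / (Real.sqrt (deg w u) * Real.sqrt (deg w v))

/-- `lam w k` is the `k`-th smallest eigenvalue (1-indexed) of the normalized Laplacian. -/
noncomputable def lam {V : Type*} [Fintype V] [DecidableEq V] (w : V → V → ℝ) (k : ℕ) : ℝ :=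
  if h : (normLap w).IsHermitian then
    ((Finset.univ.val.map h.eigenvalues).sort (· ≤ ·)).getD (k - 1) 0
  else 0

/-!
Take `k` disjoint sets attaining `ρ(k)` and shrink each one to a core: a subset of least
conductance. Since `ρ(k) < ρ(k + 1)`, enlarging the family of cores by one set, or splitting one
core in two, must produce a set of conductance at least `ρ(k + 1)`. Hence every set disjoint from
the cores expands well in `G`, and, by the gap, so does the smaller side of every cut of a core
inside that core.

Among all partitions `P` with `P i` containing the `i`-th core, take one of maximal weight inside
the parts. Moving a set `S ⊆ P i` that avoids the core to another part cannot increase this weight,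
so at least a `1 / k` fraction of the edges leaving `S` stay inside `P i`. This bounds the
conductance of `P i` by `k` times that of its core and, together with the expansion of sets away
from the cores, lifts the expansion of the core to all of `P i`.
-/

open scoped Function

/-- The weight of the pairs in `S × T`, the bilinear form behind `vol`, `volIn` and `eW`.
The sets may overlap; an edge between distinct vertices of `S ∩ T` counts in both directions. -/
noncomputable def crossWeight {V : Type*} (w : V → V → ℝ) (S T : Finset V) : ℝ :=
  ∑ u ∈ S, ∑ v ∈ T, w u v

/-- The maximum conductances of the families of `k` disjoint nonempty sets; their infimum is
`rho w k`. -/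
def familyConductances {V : Type*} [Fintype V] [DecidableEq V] (w : V → V → ℝ) (k : ℕ) : Set ℝ :=
  { r | ∃ A : Fin k → Finset V, (∀ i, (A i).Nonempty) ∧
    (∀ i j, i ≠ j → Disjoint (A i) (A j)) ∧ r = ⨆ i, phi w (A i) }

/-- A core is a nonempty set none of whose nonempty subsets has smaller conductance. -/
def IsCore {V : Type*} [Fintype V] [DecidableEq V] (w : V → V → ℝ) (B : Finset V) : Prop :=
  B.Nonempty ∧ ∀ S ⊆ B, S.Nonempty → phi w B ≤ phi w S

/-- `P` is a `K`-tight extension of `B` if `P ⊇ B` and every subset of `P \ B` keeps at least a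
`1 / K` fraction of its boundary weight inside `P`. -/
def IsTightExtension {V : Type*} [Fintype V] [DecidableEq V] (w : V → V → ℝ) (K : ℝ)
    (B P : Finset V) : Prop :=
  B ⊆ P ∧ ∀ S ⊆ P \ B, eW w S univ ≤ K * eW w S P

/-- The part with index `i` of the partition encoded by `c`. -/
def colorClass {V ι : Type*} [Fintype V] [DecidableEq ι] (c : V → ι) (i : ι) : Finset V :=
  {v | c v = i}

/-- The weight inside the parts of the partition encoded by `c`, each edge between distinct
vertices being counted in both directions. -/
noncomputable def innerWeight {V ι : Type*} [Fintype V] [Fintype ι] [DecidableEq ι]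
    (w : V → V → ℝ) (c : V → ι) : ℝ :=
  ∑ i, crossWeight w (colorClass c i) (colorClass c i)

section CrossWeight

variable {V : Type*} {w : V → V → ℝ}

lemma crossWeight_comm (hsym : ∀ u v, w u v = w v u) (S T : Finset V) :
    crossWeight w S T = crossWeight w T S := by
  rw [crossWeight, sum_comm]
  exact sum_congr rfl fun u _ ↦ sum_congr rfl fun v _ ↦ hsym v u

lemma crossWeight_nonneg (hnonneg : ∀ u v, 0 ≤ w u v) (S T : Finset V) :
    0 ≤ crossWeight w S T :=
  sum_nonneg fun u _ ↦ sum_nonneg fun v _ ↦ hnonneg u v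

lemma crossWeight_mono (hnonneg : ∀ u v, 0 ≤ w u v) {S S' T T' : Finset V} (hS : S ⊆ S')
    (hT : T ⊆ T') : crossWeight w S T ≤ crossWeight w S' T' :=
  calc crossWeight w S T
    _ ≤ crossWeight w S T' :=
      sum_le_sum fun u _ ↦ sum_le_sum_of_subset_of_nonneg hT fun v _ _ ↦ hnonneg u v
    _ ≤ crossWeight w S' T' :=
      sum_le_sum_of_subset_of_nonneg hS fun u _ _ ↦ sum_nonneg fun v _ ↦ hnonneg u v

variable [DecidableEq V]

lemma crossWeight_union_left {S T : Finset V} (h : Disjoint S T) (R : Finset V) :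
    crossWeight w (S ∪ T) R = crossWeight w S R + crossWeight w T R :=
  sum_union h

lemma crossWeight_union_right {S T : Finset V} (h : Disjoint S T) (R : Finset V) :
    crossWeight w R (S ∪ T) = crossWeight w R S + crossWeight w R T := by
  simp only [crossWeight, sum_union h, sum_add_distrib]

lemma crossWeight_union_self (hsym : ∀ u v, w u v = w v u) {S T : Finset V} (h : Disjoint S T) :
    crossWeight w (S ∪ T) (S ∪ T) =
      crossWeight w S S + crossWeight w T T + 2 * crossWeight w S T := by
  rw [crossWeight_union_left h, crossWeight_union_right h, crossWeight_union_right h,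
    crossWeight_comm hsym T S]
  ring

lemma crossWeight_add_sdiff {S P : Finset V} (h : S ⊆ P) (R : Finset V) :
    crossWeight w S R + crossWeight w (P \ S) R = crossWeight w P R := by
  rw [← crossWeight_union_left disjoint_sdiff, union_sdiff_of_subset h]

lemma crossWeight_inter_add_sdiff (X B R : Finset V) :
    crossWeight w (X ∩ B) R + crossWeight w (X \ B) R = crossWeight w X R :=
  sum_inter_add_sum_sdiff X B _

lemma eW_nonneg (hnonneg : ∀ u v, 0 ≤ w u v) (S T : Finset V) : 0 ≤ eW w S T :=
  crossWeight_nonneg hnonneg S (T \ S)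

lemma eW_sdiff (hsym : ∀ u v, w u v = w v u) {S P : Finset V} (h : S ⊆ P) :
    eW w (P \ S) P = eW w S P :=
  calc eW w (P \ S) P
    _ = crossWeight w (P \ S) (P \ (P \ S)) := rfl
    _ = crossWeight w (P \ S) S := by rw [Finset.sdiff_sdiff_eq_self h]
    _ = eW w S P := crossWeight_comm hsym _ _

lemma eW_inter_add_crossWeight_sdiff_le (hnonneg : ∀ u v, 0 ≤ w u v) {B P : Finset V} (hBP : B ⊆ P)
    (X : Finset V) :
    eW w (X ∩ B) B + crossWeight w (X \ B) (P \ X) ≤ eW w X P := by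
  have hsub : B \ (X ∩ B) ⊆ P \ X := by
    rw [sdiff_inter_self_right]
    exact sdiff_subset_sdiff hBP Subset.rfl
  calc eW w (X ∩ B) B + crossWeight w (X \ B) (P \ X)
    _ ≤ crossWeight w (X ∩ B) (P \ X) + crossWeight w (X \ B) (P \ X) :=
      add_le_add_left (crossWeight_mono hnonneg Subset.rfl hsub) _
    _ = eW w X P := crossWeight_inter_add_sdiff X B _

lemma inCondGE.mono (hnonneg : ∀ u v, 0 ≤ w u v) {P : Finset V} {a b : ℝ} (hab : a ≤ b)
    (h : inCondGE w P b) : inCondGE w P a := fun S hSP hS hne hvol ↦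
  (mul_le_mul_of_nonneg_right hab (crossWeight_nonneg hnonneg S P)).trans (h S hSP hS hne hvol)

variable [Fintype V]

lemma eW_univ_eq_add {S P : Finset V} (h : S ⊆ P) :
    eW w S univ = eW w S P + crossWeight w S Pᶜ := by
  have hdisj : Disjoint (P \ S) Pᶜ := disjoint_compl_right.mono_left sdiff_subset
  have hunion : P \ S ∪ Pᶜ = univ \ S := by
    ext v
    have := @h v
    simp only [mem_union, mem_sdiff, mem_compl, mem_univ, true_and]
    tauto
  change crossWeight w S (univ \ S) = crossWeight w S (P \ S) + crossWeight w S Pᶜ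
  rw [← crossWeight_union_right hdisj, hunion]

end CrossWeight

section Conductance

variable {V : Type*} [Fintype V] {w : V → V → ℝ}

lemma vol_nonneg (hnonneg : ∀ u v, 0 ≤ w u v) (S : Finset V) : 0 ≤ vol w S :=
  crossWeight_nonneg hnonneg S univ

lemma vol_mono (hnonneg : ∀ u v, 0 ≤ w u v) {S T : Finset V} (h : S ⊆ T) : vol w S ≤ vol w T :=
  crossWeight_mono hnonneg h Subset.rfl

lemma vol_pos (hdeg : ∀ v, 0 < deg w v) {S : Finset V} (hS : S.Nonempty) : 0 < vol w S :=
  sum_pos (fun v _ ↦ hdeg v) hS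

variable [DecidableEq V]

lemma volIn_le_vol (hnonneg : ∀ u v, 0 ≤ w u v) (P S : Finset V) : volIn w P S ≤ vol w S :=
  crossWeight_mono hnonneg Subset.rfl (subset_univ P)

lemma phi_nonneg (hnonneg : ∀ u v, 0 ≤ w u v) (S : Finset V) : 0 ≤ phi w S :=
  div_nonneg (eW_nonneg hnonneg S univ) (vol_nonneg hnonneg S)

lemma phi_mul_vol (hdeg : ∀ v, 0 < deg w v) (S : Finset V) :
    phi w S * vol w S = eW w S univ := by
  obtain rfl | hS := S.eq_empty_or_nonempty
  · simp [vol, eW]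
  · exact div_mul_cancel₀ _ (vol_pos hdeg hS).ne'

lemma mul_vol_le_eW_univ (hnonneg : ∀ u v, 0 ≤ w u v) (hdeg : ∀ v, 0 < deg w v) {a : ℝ}
    {S : Finset V} (h : S.Nonempty → a ≤ phi w S) : a * vol w S ≤ eW w S univ := by
  obtain rfl | hS := S.eq_empty_or_nonempty
  · simp [vol, eW]
  · rw [← phi_mul_vol hdeg]
    exact mul_le_mul_of_nonneg_right (h hS) (vol_nonneg hnonneg S)

end Conductance

section Rho

variable {V : Type*} [Fintype V] [DecidableEq V] {w : V → V → ℝ} {k : ℕ}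

lemma familyConductances_finite (w : V → V → ℝ) (k : ℕ) : (familyConductances w k).Finite :=
  (Set.finite_range fun A : Fin k → Finset V ↦ ⨆ i, phi w (A i)).subset
    fun _ ⟨A, _, _, hr⟩ ↦ ⟨A, hr.symm⟩

lemma familyConductances_nonempty (w : V → V → ℝ) (hk : k ≤ Fintype.card V) :
    (familyConductances w k).Nonempty := by
  obtain ⟨e⟩ : Nonempty (Fin k ↪ V) := Function.Embedding.nonempty_of_card_le (by simpa using hk)
  exact ⟨_, fun i ↦ {e i}, fun i ↦ singleton_nonempty _, by simp, rfl⟩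

lemma nonneg_of_mem_familyConductances (hnonneg : ∀ u v, 0 ≤ w u v) {r : ℝ}
    (hr : r ∈ familyConductances w k) : 0 ≤ r := by
  obtain ⟨A, -, -, rfl⟩ := hr
  exact Real.iSup_nonneg fun i ↦ phi_nonneg hnonneg (A i)

lemma rho_nonneg (hnonneg : ∀ u v, 0 ≤ w u v) (k : ℕ) : 0 ≤ rho w k :=
  Real.sInf_nonneg fun _ ↦ nonneg_of_mem_familyConductances hnonneg

lemma exists_forall_phi_le_rho (w : V → V → ℝ) (hk : k ≤ Fintype.card V) :
    ∃ A : Fin k → Finset V, (∀ i, (A i).Nonempty) ∧ Pairwise (Disjoint on A) ∧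
      ∀ i, phi w (A i) ≤ rho w k := by
  obtain ⟨A, hA, hdisj, hrho : rho w k = _⟩ :=
    (familyConductances_nonempty w hk).csInf_mem (familyConductances_finite w k)
  exact ⟨A, hA, fun i j ↦ hdisj i j,
    fun i ↦ hrho ▸ le_ciSup (f := fun i ↦ phi w (A i)) (Set.finite_range _).bddAbove i⟩

lemma exists_rho_le_phi [NeZero k] {A : Fin k → Finset V}
    (hA : ∀ i, (A i).Nonempty) (hdisj : Pairwise (Disjoint on A)) :
    ∃ i, rho w k ≤ phi w (A i) := by
  obtain ⟨i, hi⟩ := exists_eq_ciSup_of_finite (f := fun i ↦ phi w (A i))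
  have hmem : phi w (A i) ∈ familyConductances w k := ⟨A, hA, fun i j hij ↦ hdisj hij, hi⟩
  exact ⟨i, csInf_le (familyConductances_finite w k).bddBelow hmem⟩

lemma rho_succ_le_phi {B : Fin k → Finset V} (hB : ∀ i, (B i).Nonempty)
    (hdisj : Pairwise (Disjoint on B))
    (hlt : ∀ i, phi w (B i) < rho w (k + 1)) {S : Finset V} (hS : S.Nonempty)
    (hSB : ∀ i, Disjoint S (B i)) : rho w (k + 1) ≤ phi w S := by
  have hcons : Pairwise (Disjoint on (Fin.cons S B : Fin (k + 1) → Finset V)) := by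
    rw [pairwise_disjoint_on] at hdisj ⊢
    simpa [Fin.forall_fin_succ, hSB] using hdisj
  obtain ⟨i, hi⟩ := exists_rho_le_phi (w := w)
    (A := (Fin.cons S B : Fin (k + 1) → Finset V)) (Fin.cases hS hB) hcons
  induction i using Fin.cases with
  | zero => exact hi
  | succ i => exact absurd hi (hlt i).not_ge

lemma rho_succ_le_phi_or_sdiff {B : Fin k → Finset V} (hB : ∀ i, (B i).Nonempty)
    (hdisj : Pairwise (Disjoint on B))
    (hlt : ∀ i, phi w (B i) < rho w (k + 1)) {i : Fin k} {S : Finset V} (hSB : S ⊆ B i)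
    (hS : S.Nonempty) (hS' : (B i \ S).Nonempty) :
    rho w (k + 1) ≤ phi w S ∨ rho w (k + 1) ≤ phi w (B i \ S) := by
  by_contra! ⟨hlt_S, hlt_sdiff⟩
  have hsub : ∀ j, Function.update B i (B i \ S) j ⊆ B j :=
    (Function.forall_update_iff B fun j T ↦ T ⊆ B j).2 ⟨sdiff_subset, fun j _ ↦ Subset.rfl⟩
  refine hlt_S.not_ge (rho_succ_le_phi (B := Function.update B i (B i \ S)) ?_
    (fun a b hab ↦ (hdisj hab).mono (hsub a) (hsub b)) ?_ hS ?_)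
  · exact (Function.forall_update_iff B fun _ T ↦ T.Nonempty).2 ⟨hS', fun j _ ↦ hB j⟩
  · exact (Function.forall_update_iff B fun _ T ↦ phi w T < _).2 ⟨hlt_sdiff, fun j _ ↦ hlt j⟩
  · exact (Function.forall_update_iff B fun _ T ↦ Disjoint S T).2
      ⟨disjoint_sdiff, fun j hj ↦ (hdisj hj.symm).mono_left hSB⟩

end Rho

section Core

variable {V : Type*} [Fintype V] [DecidableEq V] {w : V → V → ℝ} {B S : Finset V} {ρ : ℝ}

lemma exists_isCore_subset (w : V → V → ℝ) {A : Finset V} (hA : A.Nonempty) :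
    ∃ B ⊆ A, IsCore w B ∧ phi w B ≤ phi w A := by
  obtain ⟨B, hB, hmin⟩ := exists_min_image {S ∈ A.powerset | S.Nonempty} (phi w)
    ⟨A, mem_filter.2 ⟨mem_powerset_self A, hA⟩⟩
  simp only [mem_filter, mem_powerset, and_imp] at hB hmin
  exact ⟨B, hB.1, ⟨hB.2, fun S hS ↦ hmin S (hS.trans hB.1)⟩, hmin A Subset.rfl hA⟩

lemma exists_isCore_family (w : V → V → ℝ) {k : ℕ} (hk : k ≤ Fintype.card V) :
    ∃ B : Fin k → Finset V, (∀ i, IsCore w (B i)) ∧ Pairwise (Disjoint on B) ∧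
      ∀ i, phi w (B i) ≤ rho w k := by
  obtain ⟨A, hA, hdisj, hphi⟩ := exists_forall_phi_le_rho w hk
  choose B hBA hB hBphi using fun i ↦ exists_isCore_subset w (hA i)
  exact ⟨B, hB, fun i j hij ↦ (hdisj hij).mono (hBA i) (hBA j),
    fun i ↦ (hBphi i).trans (hphi i)⟩

lemma IsCore.phi_mul_vol_le (hnonneg : ∀ u v, 0 ≤ w u v) (hdeg : ∀ v, 0 < deg w v)
    (hB : IsCore w B) (hS : S ⊆ B) : phi w B * vol w S ≤ eW w S univ :=
  mul_vol_le_eW_univ hnonneg hdeg (hB.2 S hS)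

/-- By minimality `B \ S` already has boundary at least `phi w B * vol w (B \ S)`, which leaves
little of the boundary of `B` to `S`. -/
lemma IsCore.crossWeight_compl_le (hsym : ∀ u v, w u v = w v u) (hnonneg : ∀ u v, 0 ≤ w u v)
    (hdeg : ∀ v, 0 < deg w v) (hB : IsCore w B) (hS : S ⊆ B) :
    crossWeight w S Bᶜ ≤ phi w B * vol w S + eW w S B := by
  have hvol : vol w S + vol w (B \ S) = vol w B := crossWeight_add_sdiff hS univ
  have hboundary : crossWeight w S Bᶜ + crossWeight w (B \ S) Bᶜ = phi w B * vol w B := by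
    rw [crossWeight_add_sdiff hS, phi_mul_vol hdeg]
    rfl
  have hrest : phi w B * vol w (B \ S) ≤ eW w S B + crossWeight w (B \ S) Bᶜ := by
    rw [← eW_sdiff hsym hS, ← eW_univ_eq_add sdiff_subset]
    exact hB.phi_mul_vol_le hnonneg hdeg sdiff_subset
  rw [← hvol, mul_add] at hboundary
  linarith

lemma IsCore.eW_univ_le (hsym : ∀ u v, w u v = w v u) (hnonneg : ∀ u v, 0 ≤ w u v)
    (hdeg : ∀ v, 0 < deg w v) (hB : IsCore w B) (hS : S ⊆ B) :
    eW w S univ ≤ phi w B * vol w S + 2 * eW w S B := by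
  rw [eW_univ_eq_add hS]
  linarith [hB.crossWeight_compl_le hsym hnonneg hdeg hS]

lemma IsCore.sub_phi_mul_vol_le (hsym : ∀ u v, w u v = w v u) (hnonneg : ∀ u v, 0 ≤ w u v)
    (hdeg : ∀ v, 0 < deg w v) (hB : IsCore w B) (hρ : phi w B ≤ ρ)
    (hS : S ⊆ B) (hvol : vol w S ≤ vol w (B \ S))
    (hsplit : S.Nonempty → (B \ S).Nonempty → ρ ≤ phi w S ∨ ρ ≤ phi w (B \ S)) :
    (ρ - phi w B) * vol w S ≤ 2 * eW w S B := by
  have of_le_phi {T : Finset V} (hT : T ⊆ B) (h : ρ ≤ phi w T) :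
      (ρ - phi w B) * vol w T ≤ 2 * eW w T B := by
    have hlower := mul_vol_le_eW_univ hnonneg hdeg fun _ ↦ h
    have hupper := hB.eW_univ_le hsym hnonneg hdeg hT
    linarith
  obtain rfl | hSne := S.eq_empty_or_nonempty
  · simp [vol, eW]
  have hne : (B \ S).Nonempty := by
    rw [nonempty_iff_ne_empty]
    intro hempty
    have hpos := vol_pos hdeg hSne
    rw [hempty] at hvol
    exact hvol.not_gt hpos
  obtain h | h := hsplit hSne hne
  · exact of_le_phi hS h
  · calc (ρ - phi w B) * vol w S
      _ ≤ (ρ - phi w B) * vol w (B \ S) := mul_le_mul_of_nonneg_left hvol (sub_nonneg.2 hρ)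
      _ ≤ 2 * eW w (B \ S) B := of_le_phi sdiff_subset h
      _ = 2 * eW w S B := by rw [eW_sdiff hsym hS]

end Core

section Partition

variable {V ι : Type*} [Fintype V] [DecidableEq ι] {w : V → V → ℝ}

lemma pairwise_disjoint_colorClass (c : V → ι) : Pairwise (Disjoint on colorClass c) := by
  intro i j hij
  rw [Function.onFun, disjoint_left]
  intro v hi hj
  simp only [colorClass, mem_filter, mem_univ, true_and] at hi hj
  exact hij (hi.symm.trans hj)

lemma exists_forall_subset_colorClass [Nonempty ι] {B : ι → Finset V}
    (hdisj : Pairwise (Disjoint on B)) : ∃ c : V → ι, ∀ i, B i ⊆ colorClass c i := by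
  have hcolor : ∀ v, ∃ i, ∀ j, v ∈ B j → i = j := by
    intro v
    by_cases hv : ∃ i, v ∈ B i
    · obtain ⟨i, hi⟩ := hv
      exact ⟨i, fun j hj ↦ hdisj.eq (not_disjoint_iff.2 ⟨v, hi, hj⟩)⟩
    · exact ⟨Classical.arbitrary ι, fun j hj ↦ (hv ⟨j, hj⟩).elim⟩
  choose c hc using hcolor
  exact ⟨c, fun i v hv ↦ by simpa [colorClass] using hc v i hv⟩

lemma sum_crossWeight_colorClass [Fintype ι] (w : V → V → ℝ) (c : V → ι) (S : Finset V) :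
    ∑ i, crossWeight w S (colorClass c i) = crossWeight w S univ := by
  simp only [crossWeight, colorClass]
  rw [sum_comm]
  exact sum_congr rfl fun u _ ↦ sum_fiberwise _ c (w u)

variable [DecidableEq V]

lemma colorClass_piecewise_same (c : V → ι) (S : Finset V) (j : ι) :
    colorClass (S.piecewise (fun _ ↦ j) c) j = colorClass c j ∪ S := by
  ext v
  by_cases hv : v ∈ S <;> simp [colorClass, hv]

lemma colorClass_piecewise_of_ne (c : V → ι) (S : Finset V) {j l : ι} (h : l ≠ j) :
    colorClass (S.piecewise (fun _ ↦ j) c) l = colorClass c l \ S := by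
  ext v
  by_cases hv : v ∈ S <;> simp [colorClass, hv, h.symm]

lemma crossWeight_compl_colorClass [Fintype ι] (w : V → V → ℝ) (c : V → ι) (i : ι)
    (S : Finset V) :
    crossWeight w S (colorClass c i)ᶜ = ∑ j ∈ univ.erase i, crossWeight w S (colorClass c j) := by
  have hsplit : crossWeight w S (colorClass c i) + crossWeight w S (colorClass c i)ᶜ =
      crossWeight w S univ := by
    rw [← crossWeight_union_right disjoint_compl_right, union_compl]
  rw [← sum_crossWeight_colorClass w c, ← add_sum_erase univ _ (mem_univ i)] at hsplit
  exact add_left_cancel hsplit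

lemma innerWeight_piecewise [Fintype ι] (hsym : ∀ u v, w u v = w v u) (c : V → ι) {i j : ι}
    (hij : i ≠ j) {S : Finset V} (hS : S ⊆ colorClass c i) :
    innerWeight w (S.piecewise (fun _ ↦ j) c) = innerWeight w c +
      2 * (crossWeight w S (colorClass c j) - eW w S (colorClass c i)) := by
  have hdisj {l : ι} (hl : l ≠ i) : Disjoint (colorClass c l) S :=
    (pairwise_disjoint_colorClass c hl).mono_right hS
  have hrest (l : ι) (hl : l ≠ i ∧ l ≠ j) : crossWeight w
        (colorClass (S.piecewise (fun _ ↦ j) c) l) (colorClass (S.piecewise (fun _ ↦ j) c) l) -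
      crossWeight w (colorClass c l) (colorClass c l) = 0 := by
    rw [colorClass_piecewise_of_ne c S hl.2, sdiff_eq_self_of_disjoint (hdisj hl.1), sub_self]
  have hgain := crossWeight_union_self hsym (hdisj hij.symm)
  have hloss := crossWeight_union_self hsym (disjoint_sdiff (s := S) (t := colorClass c i))
  rw [union_sdiff_of_subset hS] at hloss
  rw [← sub_eq_iff_eq_add', innerWeight, innerWeight, ← sum_sub_distrib,
    Fintype.sum_eq_add i j hij hrest, colorClass_piecewise_of_ne c S hij,
    colorClass_piecewise_same, hgain, hloss, crossWeight_comm hsym (colorClass c j) S]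
  change _ = 2 * (_ - crossWeight w S (colorClass c i \ S))
  ring

lemma exists_optimal_coloring [Finite ι] [Nonempty ι] (hsym : ∀ u v, w u v = w v u)
    {B : ι → Finset V} (hdisj : Pairwise (Disjoint on B)) :
    ∃ c : V → ι, (∀ i, B i ⊆ colorClass c i) ∧
      ∀ i, ∀ S ⊆ colorClass c i \ B i, ∀ j, i ≠ j →
        crossWeight w S (colorClass c j) ≤ eW w S (colorClass c i) := by
  cases nonempty_fintype ι
  obtain ⟨c, hBc : ∀ i, B i ⊆ colorClass c i, hmax⟩ :=
    Set.exists_max_image {c : V → ι | ∀ i, B i ⊆ colorClass c i} (innerWeight w) (Set.toFinite _)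
      (exists_forall_subset_colorClass hdisj)
  refine ⟨c, hBc, fun i S hS j hij ↦ ?_⟩
  have hSc : S ⊆ colorClass c i := hS.trans sdiff_subset
  have hSB (l : ι) : Disjoint (B l) S := by
    obtain rfl | hl := eq_or_ne l i
    · exact disjoint_sdiff.mono_right hS
    · exact (pairwise_disjoint_colorClass c hl).mono (hBc l) hSc
  have hmove (l : ι) : B l ⊆ colorClass (S.piecewise (fun _ ↦ j) c) l := by
    obtain rfl | hl := eq_or_ne l j
    · rw [colorClass_piecewise_same]
      exact (hBc l).trans subset_union_left
    · rw [colorClass_piecewise_of_ne c S hl, subset_sdiff]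
      exact ⟨hBc l, hSB l⟩
  have hle := hmax _ hmove
  rw [innerWeight_piecewise hsym c hij hSc] at hle
  linarith

lemma exists_isTightExtension_colorClass [Fintype ι] [Nonempty ι] (hsym : ∀ u v, w u v = w v u)
    {B : ι → Finset V} (hdisj : Pairwise (Disjoint on B)) :
    ∃ c : V → ι, ∀ i, IsTightExtension w (Fintype.card ι) (B i) (colorClass c i) := by
  obtain ⟨c, hBc, hopt⟩ := exists_optimal_coloring hsym hdisj
  refine ⟨c, fun i ↦ ⟨hBc i, fun S hS ↦ ?_⟩⟩
  calc eW w S univ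
    _ = eW w S (colorClass c i) + ∑ j ∈ univ.erase i, crossWeight w S (colorClass c j) := by
      rw [eW_univ_eq_add (hS.trans sdiff_subset), crossWeight_compl_colorClass]
    _ ≤ eW w S (colorClass c i) + ∑ _j ∈ univ.erase i, eW w S (colorClass c i) := by
      gcongr with j hj
      exact hopt i S hS j (ne_of_mem_erase hj).symm
    _ = Fintype.card ι * eW w S (colorClass c i) := by
      rw [add_sum_erase univ (fun _ ↦ eW w S (colorClass c i)) (mem_univ i), sum_const, card_univ,
        nsmul_eq_mul]

end Partition

section TightExtension

variable {V : Type*} [Fintype V] [DecidableEq V] {w : V → V → ℝ} {B P X : Finset V} {K ρ ε : ℝ}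

lemma IsTightExtension.eW_univ_le (hsym : ∀ u v, w u v = w v u) (hnonneg : ∀ u v, 0 ≤ w u v)
    (hK : 1 ≤ K) (hBP : IsTightExtension w K B P) : eW w P univ ≤ K * eW w B univ := by
  have hrest : eW w (P \ B) univ ≤ K * eW w B P := by
    rw [← eW_sdiff hsym hBP.1]
    exact hBP.2 _ Subset.rfl
  rw [eW_univ_eq_add sdiff_subset, eW_sdiff hsym hBP.1] at hrest
  have hcross : crossWeight w B Pᶜ ≤ K * crossWeight w B Pᶜ :=
    le_mul_of_one_le_left (crossWeight_nonneg hnonneg _ _) hK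
  calc eW w P univ
    _ = crossWeight w B Pᶜ + crossWeight w (P \ B) Pᶜ := (crossWeight_add_sdiff hBP.1 _).symm
    _ ≤ K * (eW w B P + crossWeight w B Pᶜ) := by linarith [eW_nonneg hnonneg B P]
    _ = K * eW w B univ := by rw [eW_univ_eq_add hBP.1]

lemma IsTightExtension.phi_le (hsym : ∀ u v, w u v = w v u) (hnonneg : ∀ u v, 0 ≤ w u v)
    (hdeg : ∀ v, 0 < deg w v) (hK : 1 ≤ K) (hBP : IsTightExtension w K B P)
    (hB : B.Nonempty) : phi w P ≤ K * phi w B := by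
  rw [phi, div_le_iff₀ (vol_pos hdeg (hB.mono hBP.1))]
  calc eW w P univ
    _ ≤ K * (phi w B * vol w B) := by
      rw [phi_mul_vol hdeg]
      exact hBP.eW_univ_le hsym hnonneg hK
    _ ≤ K * (phi w B * vol w P) := by
      gcongr
      · exact phi_nonneg hnonneg B
      · exact vol_mono hnonneg hBP.1
    _ = K * phi w B * vol w P := (mul_assoc _ _ _).symm

lemma eW_sdiff_le (hsym : ∀ u v, w u v = w v u) (hnonneg : ∀ u v, 0 ≤ w u v) (hX : X ⊆ P) :
    eW w (X \ B) P ≤ crossWeight w (X \ B) (P \ X) + crossWeight w (X ∩ B) Bᶜ := by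
  have hdisj : Disjoint (P \ X) (X ∩ B) := sdiff_disjoint.mono_right inter_subset_left
  have hunion : P \ (X \ B) = P \ X ∪ X ∩ B := by
    ext v
    have := @hX v
    simp only [mem_union, mem_sdiff, mem_inter]
    tauto
  calc eW w (X \ B) P
    _ = crossWeight w (X \ B) (P \ X ∪ X ∩ B) := by rw [← hunion]; rfl
    _ = crossWeight w (X \ B) (P \ X) + crossWeight w (X ∩ B) (X \ B) := by
      rw [crossWeight_union_right hdisj, crossWeight_comm hsym (X \ B) (X ∩ B)]
    _ ≤ crossWeight w (X \ B) (P \ X) + crossWeight w (X ∩ B) Bᶜ := by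
      gcongr
      exact crossWeight_mono hnonneg Subset.rfl fun v hv ↦ mem_compl.2 (mem_sdiff.1 hv).2

lemma IsTightExtension.mul_vol_sdiff_le (hsym : ∀ u v, w u v = w v u)
    (hnonneg : ∀ u v, 0 ≤ w u v) (hdeg : ∀ v, 0 < deg w v) (hK : 0 ≤ K) (hB : IsCore w B)
    (hBP : IsTightExtension w K B P)
    (hout : ∀ S ⊆ P \ B, S.Nonempty → ρ ≤ phi w S) (hX : X ⊆ P) :
    ρ * vol w (X \ B) ≤ K * (eW w X P + phi w B * vol w (X ∩ B)) := by
  have hsub : X \ B ⊆ P \ B := sdiff_subset_sdiff hX Subset.rfl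
  calc ρ * vol w (X \ B)
    _ ≤ eW w (X \ B) univ := mul_vol_le_eW_univ hnonneg hdeg (hout _ hsub)
    _ ≤ K * eW w (X \ B) P := hBP.2 _ hsub
    _ ≤ K * (eW w X P + phi w B * vol w (X ∩ B)) := by
      gcongr
      linarith [eW_sdiff_le hsym hnonneg hX (B := B),
        hB.crossWeight_compl_le hsym hnonneg hdeg (inter_subset_right : X ∩ B ⊆ B),
        eW_inter_add_crossWeight_sdiff_le hnonneg hBP.1 X]

lemma IsTightExtension.mul_vol_le_eW (hsym : ∀ u v, w u v = w v u)
    (hnonneg : ∀ u v, 0 ≤ w u v) (hdeg : ∀ v, 0 < deg w v) (hK : 1 ≤ K) (hε : 0 ≤ ε)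
    (hB : IsCore w B) (hBP : IsTightExtension w K B P) (hgap : (1 + ε) * phi w B ≤ ρ)
    (hsplit : ∀ S ⊆ B, S.Nonempty → (B \ S).Nonempty → ρ ≤ phi w S ∨ ρ ≤ phi w (B \ S))
    (hout : ∀ S ⊆ P \ B, S.Nonempty → ρ ≤ phi w S) (hX : X ⊆ P)
    (hvol : vol w (X ∩ B) ≤ vol w (B \ X)) :
    ε * ρ / ((4 + 3 * ε) * K) * vol w X ≤ eW w X P := by
  have hsum : vol w (X ∩ B) + vol w (X \ B) = vol w X := crossWeight_inter_add_sdiff X B univ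
  have hφρ : phi w B ≤ ρ :=
    (le_mul_of_one_le_left (phi_nonneg hnonneg B) (by linarith)).trans hgap
  have hinside : (ρ - phi w B) * vol w (X ∩ B) ≤ 2 * eW w X P := by
    have hcore := hB.sub_phi_mul_vol_le hsym hnonneg hdeg hφρ inter_subset_right
      (by rwa [sdiff_inter_self_right]) (hsplit _ inter_subset_right)
    linarith [eW_inter_add_crossWeight_sdiff_le hnonneg hBP.1 X,
      crossWeight_nonneg hnonneg (X \ B) (P \ X)]
  have houtside := hBP.mul_vol_sdiff_le hsym hnonneg hdeg (by linarith) hB hout hX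
  -- The gap makes both `ε φ(B)` and `ε ρ / (1 + ε)` at most `ρ - φ(B)`.
  have hcore_phi : ε * phi w B * vol w (X ∩ B) ≤ 2 * eW w X P := by
    refine le_trans (mul_le_mul_of_nonneg_right ?_ (vol_nonneg hnonneg _)) hinside
    linarith
  have hcore_rho : ε * ρ * vol w (X ∩ B) ≤ 2 * (1 + ε) * eW w X P := by
    linarith [mul_le_mul_of_nonneg_left hinside hε]
  have hE := eW_nonneg hnonneg X P
  rw [div_mul_eq_mul_div, div_le_iff₀ (by positivity), ← hsum]
  calc ε * ρ * (vol w (X ∩ B) + vol w (X \ B))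
    _ = ε * ρ * vol w (X ∩ B) + ε * (ρ * vol w (X \ B)) := by ring
    _ ≤ 2 * (1 + ε) * eW w X P + ε * (K * (eW w X P + phi w B * vol w (X ∩ B))) := by gcongr
    _ = 2 * (1 + ε) * eW w X P + K * (ε * eW w X P + ε * phi w B * vol w (X ∩ B)) := by ring
    _ ≤ K * (2 * (1 + ε) * eW w X P) + K * (ε * eW w X P + 2 * eW w X P) :=
      add_le_add (le_mul_of_one_le_left (by positivity) hK) (by gcongr)
    _ = eW w X P * ((4 + 3 * ε) * K) := by ring

lemma IsTightExtension.inCondGE (hsym : ∀ u v, w u v = w v u) (hnonneg : ∀ u v, 0 ≤ w u v)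
    (hdeg : ∀ v, 0 < deg w v) (hK : 1 ≤ K) (hε : 0 ≤ ε) (hB : IsCore w B)
    (hBP : IsTightExtension w K B P) (hgap : (1 + ε) * phi w B ≤ ρ)
    (hsplit : ∀ S ⊆ B, S.Nonempty → (B \ S).Nonempty → ρ ≤ phi w S ∨ ρ ≤ phi w (B \ S))
    (hout : ∀ S ⊆ P \ B, S.Nonempty → ρ ≤ phi w S) :
    inCondGE w P (ε * ρ / ((4 + 3 * ε) * K)) := by
  intro S hS _ _ hhalf
  have hρ : 0 ≤ ρ := le_trans (mul_nonneg (by linarith) (phi_nonneg hnonneg B)) hgap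
  have hexpand {X : Finset V} (hX : X ⊆ P) (hvol : vol w (X ∩ B) ≤ vol w (B \ X)) :
      ε * ρ / ((4 + 3 * ε) * K) * volIn w P X ≤ eW w X P :=
    (mul_le_mul_of_nonneg_left (volIn_le_vol hnonneg P X) (by positivity)).trans
      (hBP.mul_vol_le_eW hsym hnonneg hdeg hK hε hB hgap hsplit hout hX hvol)
  obtain hvol | hvol := le_total (vol w (S ∩ B)) (vol w (B \ S))
  · exact hexpand hS hvol
  · have hinter : (P \ S) ∩ B = B \ S := by
      rw [sdiff_inter_right_comm, inter_eq_right.2 hBP.1]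
    have hsdiff : B \ (P \ S) = S ∩ B := by
      rw [sdiff_sdiff_right', sdiff_eq_empty_iff_subset.2 hBP.1]
      simp [inter_comm]
    have hsum : volIn w P S + volIn w P (P \ S) = volIn w P P := crossWeight_add_sdiff hS P
    have hle : volIn w P S ≤ volIn w P (P \ S) := by linarith
    calc ε * ρ / ((4 + 3 * ε) * K) * volIn w P S
      _ ≤ ε * ρ / ((4 + 3 * ε) * K) * volIn w P (P \ S) := by gcongr
      _ ≤ eW w (P \ S) P := hexpand sdiff_subset (by rwa [hinter, hsdiff])
      _ = eW w S P := eW_sdiff hsym hS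

end TightExtension

theorem stmt2_general {V : Type*} [Fintype V] [DecidableEq V] (w : V → V → ℝ)
    (hsym : ∀ u v, w u v = w v u) (hnonneg : ∀ u v, 0 ≤ w u v)
    (hdeg : ∀ v, 0 < deg w v) (k : ℕ) (hk : 1 ≤ k)
    (hcard : k + 1 ≤ Fintype.card V) (ε : ℝ) (hε : 0 ≤ ε)
    (hgap : (1 + ε) * rho w k < rho w (k + 1)) :
    ∃ P : Fin k → Finset V, (∀ i, (P i).Nonempty) ∧
      (∀ i j, i ≠ j → Disjoint (P i) (P j)) ∧
      (∀ v : V, ∃ i, v ∈ P i) ∧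
      (∀ i, inCondGE w (P i) (ε * rho w (k + 1) / ((4 + 3 * ε) * (k : ℝ))) ∧
        phi w (P i) ≤ (k : ℝ) * rho w k) := by
  have : NeZero k := ⟨by lia⟩
  have hk' : (1 : ℝ) ≤ k := mod_cast hk
  obtain ⟨B, hB, hdisj, hBphi⟩ := exists_isCore_family w (k := k) (by lia)
  obtain ⟨c, hc⟩ := exists_isTightExtension_colorClass hsym hdisj
  rw [Fintype.card_fin] at hc
  have hgapB (i : Fin k) : (1 + ε) * phi w (B i) < rho w (k + 1) :=
    (mul_le_mul_of_nonneg_left (hBphi i) (by linarith)).trans_lt hgap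
  have hlt (i : Fin k) : phi w (B i) < rho w (k + 1) :=
    (le_mul_of_one_le_left (phi_nonneg hnonneg _) (by linarith)).trans_lt (hgapB i)
  have hBne (i : Fin k) : (B i).Nonempty := (hB i).1
  refine ⟨colorClass c, fun i ↦ (hBne i).mono (hc i).1,
    fun i j hij ↦ pairwise_disjoint_colorClass c hij, fun v ↦ ⟨c v, by simp [colorClass]⟩,
    fun i ↦ ⟨?_, ?_⟩⟩
  · refine (hc i).inCondGE hsym hnonneg hdeg hk' hε (hB i) (hgapB i).le
      (fun S ↦ rho_succ_le_phi_or_sdiff hBne hdisj hlt) fun S hS hSne ↦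
        rho_succ_le_phi hBne hdisj hlt hSne fun j ↦ ?_
    obtain rfl | hj := eq_or_ne j i
    · exact sdiff_disjoint.mono_left hS
    · exact (pairwise_disjoint_colorClass c hj.symm).mono (hS.trans sdiff_subset) (hc j).1
  · exact ((hc i).phi_le hsym hnonneg hdeg hk' (hBne i)).trans
      (mul_le_mul_of_nonneg_left (hBphi i) (by linarith))

theorem stmt2 {V : Type*} [Fintype V] [DecidableEq V] (w : V → V → ℝ)
    (hsym : ∀ u v, w u v = w v u) (hnonneg : ∀ u v, 0 ≤ w u v)
    (hdeg : ∀ v, 0 < deg w v) (k : ℕ) (hk : 1 ≤ k)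
    (hcard : k + 1 ≤ Fintype.card V)
    (ε : ℝ) (hε0 : 0 < ε) (hε1 : ε < 1)
    (hgap : (1 + ε) * rho w k < rho w (k + 1)) :
    ∃ P : Fin k → Finset V, (∀ i, (P i).Nonempty) ∧
      (∀ i j, i ≠ j → Disjoint (P i) (P j)) ∧
      (∀ v : V, ∃ i, v ∈ P i) ∧
      (∀ i, inCondGE w (P i) (ε * rho w (k + 1) / (14 * (k : ℝ))) ∧
        phi w (P i) ≤ (k : ℝ) * rho w k) := by
  obtain ⟨P, hne, hdisj, hcover, hP⟩ :=
    stmt2_general w hsym hnonneg hdeg k hk hcard ε hε0.le hgap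
  have hrho := rho_nonneg hnonneg (k + 1)
  exact ⟨P, hne, hdisj, hcover, fun i ↦ ⟨(hP i).1.mono hnonneg (by gcongr; linarith), (hP i).2⟩⟩
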